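/- For x ∈ L^∨ the residue (x,x) mod 2ℤ depends only on the class of x in A_L = L^∨/L, and the set of nonzero classes [x] ∈ A_L with (x,x) ≡ 0 (mod 2ℤ) consists of exactly two elements, namely the (distinct) classes [(u+e₁)/2] and [(u+e₂)/2]. -/

import Mathlib

/-!
In coordinates, `(x, u)` is the sum of the two coordinates of `x` in the first hyperbolic plane,
so `L` is the sublattice of `Λ̃` on which this sum is even (`mem_LL`). Since the other two
hyperbolic planes and the two copies of `−E₈` are unimodular, every element of `L^∨` is congruent
modulo `L` to some `(a u + b e₁ + c e₂) / 2` with integers `a, b, c` (`exists_halfVec`), and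
such an element lies in `L` exactly when `a, b, c` are all even (`halfVec_mem_Lmap`). Hence
`A_L ≅ (ℤ/2)³`, and since `L` is even the residue of `(x, x)` modulo `2ℤ` descends to `A_L`
(`Bq_sub_Bq_even`), where it equals `(a² - b² - c²) / 2`. As squares are `0` or `1` modulo `4`
according to parity, this is even exactly for `(a, b, c) ≡ (0,0,0), (1,1,0), (1,0,1)` modulo `2`
(`four_dvd_iff`).
-/

/-- Index type for a basis of the lattice `Λ̃ = U³ ⊕ (−E₈)² ⊕ (−2)`:
three hyperbolic planes, two copies of `−E₈`, and one rank-1 piece. -/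
abbrev LamIdx : Type := (Fin 3 × Fin 2) ⊕ ((Fin 2 × Fin 8) ⊕ Fin 1)

/-- The standard Gram matrix of the `E₈` lattice. -/
def E8mat : Matrix (Fin 8) (Fin 8) ℤ :=
  !![2, -1, 0, 0, 0, 0, 0, 0;
     -1, 2, -1, 0, 0, 0, 0, 0;
     0, -1, 2, -1, 0, 0, 0, 0;
     0, 0, -1, 2, -1, 0, 0, 0;
     0, 0, 0, -1, 2, -1, 0, -1;
     0, 0, 0, 0, -1, 2, -1, 0;
     0, 0, 0, 0, 0, -1, 2, 0;
     0, 0, 0, 0, -1, 0, 0, 2]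

/-- The Gram matrix of `Λ̃ = U³ ⊕ (−E₈)² ⊕ (−2)`: block diagonal with three hyperbolic
blocks, two `−E₈` blocks and one `(−2)` block. -/
def gram : Matrix LamIdx LamIdx ℤ := fun i j =>
  match i, j with
  | .inl (a, i), .inl (b, j) => if a = b then (if i = j then 0 else 1) else 0
  | .inr (.inl (a, i)), .inr (.inl (b, j)) => if a = b then -E8mat i j else 0
  | .inr (.inr _), .inr (.inr _) => -2
  | _, _ => 0

/-- The bilinear form `(·,·)` of the lattice `Λ̃`. -/
noncomputable def B : (LamIdx → ℤ) →ₗ[ℤ] (LamIdx → ℤ) →ₗ[ℤ] ℤ :=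
  Matrix.toLinearMap₂' ℤ gram

/-- The vector `u`, of square `2`, in the first hyperbolic summand. -/
def uu : LamIdx → ℤ := fun i =>
  if i = Sum.inl (0, 0) then 1 else if i = Sum.inl (0, 1) then 1 else 0

/-- The vector `e₁`, a generator of `u^⊥ ∩ U` in the first hyperbolic summand. -/
def ee1 : LamIdx → ℤ := fun i =>
  if i = Sum.inl (0, 0) then 1 else if i = Sum.inl (0, 1) then -1 else 0

/-- The vector `e₂`, a generator of the `(−2)` summand. -/
def ee2 : LamIdx → ℤ := fun i =>
  if i = Sum.inr (Sum.inr 0) then 1 else 0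

/-- The lattice `Λ = u^⊥ ⊆ Λ̃`. -/
noncomputable def Lam : Submodule ℤ (LamIdx → ℤ) := LinearMap.ker (B.flip uu)

/-- The sublattice `L = ℤu + u^⊥ = ℤu ⊕ Λ` of `Λ̃`. -/
noncomputable def LL : Submodule ℤ (LamIdx → ℤ) := Submodule.span ℤ {uu} ⊔ Lam

/-- The inclusion of `Λ̃` into `Λ̃ ⊗ ℚ`. -/
def toQlin : (LamIdx → ℤ) →ₗ[ℤ] (LamIdx → ℚ) where
  toFun x := fun i => (x i : ℚ)
  map_add' x y := by funext i; push_cast; simp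
  map_smul' c x := by funext i; push_cast; simp

/-- The Gram matrix of `Λ̃`, over `ℚ`. -/
def gramQ : Matrix LamIdx LamIdx ℚ := fun i j => (gram i j : ℚ)

/-- The `ℚ`-bilinear extension of the form of `Λ̃` to `Λ̃ ⊗ ℚ`. -/
noncomputable def Bq : (LamIdx → ℚ) →ₗ[ℚ] (LamIdx → ℚ) →ₗ[ℚ] ℚ :=
  Matrix.toLinearMap₂' ℚ gramQ

/-- The image of `L` in `Λ̃ ⊗ ℚ`. -/
noncomputable def Lmap : Submodule ℤ (LamIdx → ℚ) := Submodule.map toQlin LL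

/-- The dual lattice `L^∨ = {x ∈ L ⊗ ℚ : (x,y) ∈ ℤ for all y ∈ L}`. -/
noncomputable def Ldual : Submodule ℤ (LamIdx → ℚ) where
  carrier := {x | ∀ y ∈ LL, ∃ n : ℤ, Bq x (toQlin y) = n}
  add_mem' := by
    rintro a b ha hb y hy
    obtain ⟨n, hn⟩ := ha y hy
    obtain ⟨m, hm⟩ := hb y hy
    exact ⟨n + m, by rw [map_add, LinearMap.add_apply, hn, hm]; push_cast; ring⟩
  zero_mem' := fun y hy => ⟨0, by simp⟩
  smul_mem' := by
    intro c x hx y hy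
    obtain ⟨n, hn⟩ := hx y hy
    refine ⟨c * n, ?_⟩
    have h1 : Bq (c • x) = c • Bq x := map_zsmul Bq c x
    rw [h1, LinearMap.smul_apply, hn]
    push_cast
    simp

/-! ### The bilinear form -/

theorem B_apply (x y : LamIdx → ℤ) : B x y = ∑ i, ∑ j, x i * gram i j * y j := by
  simp only [B, Matrix.toLinearMap₂'_apply, smul_eq_mul]
  exact Finset.sum_congr rfl fun i _ => Finset.sum_congr rfl fun j _ => by ring

theorem Bq_apply (x y : LamIdx → ℚ) : Bq x y = ∑ i, ∑ j, x i * gram i j * y j := by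
  simp only [Bq, Matrix.toLinearMap₂'_apply, smul_eq_mul, gramQ]
  exact Finset.sum_congr rfl fun i _ => Finset.sum_congr rfl fun j _ => by ring

theorem Bq_toQlin (x y : LamIdx → ℤ) : Bq (toQlin x) (toQlin y) = (B x y : ℚ) := by
  rw [Bq_apply, B_apply]
  push_cast
  rfl

theorem E8mat_symm (i j : Fin 8) : E8mat i j = E8mat j i := by
  have h : E8mat.transpose = E8mat := by decide
  exact congrFun (congrFun h j) i

theorem gram_symm (i j : LamIdx) : gram i j = gram j i := by
  rcases i with ⟨a, i⟩ | ⟨a, i⟩ | i <;> rcases j with ⟨b, j⟩ | ⟨b, j⟩ | j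
  case inr.inl.inr.inl => simp only [gram, eq_comm (a := a), E8mat_symm i]
  all_goals simp [gram, eq_comm]

theorem gram_diag_even (i : LamIdx) : Even (gram i i) := by
  rcases i with ⟨a, i⟩ | ⟨a, i⟩ | i
  · simp [gram]
  · fin_cases i <;> simp [gram, E8mat]
  · simp [gram]

theorem Bq_symm (x y : LamIdx → ℚ) : Bq x y = Bq y x := by
  rw [Bq_apply, Bq_apply, Finset.sum_comm]
  refine Finset.sum_congr rfl fun i _ => Finset.sum_congr rfl fun j _ => ?_
  rw [gram_symm]; ring

theorem B_symm (x y : LamIdx → ℤ) : B x y = B y x := by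
  have h := Bq_symm (toQlin x) (toQlin y)
  rw [Bq_toQlin, Bq_toQlin] at h
  exact_mod_cast h

/-- The lattice `Λ̃` is even. Evenness of `B x x` is stable under sums because the cross
terms come in pairs, so it is enough to look at multiples of the basis vectors. -/
theorem B_even (x : LamIdx → ℤ) : Even (B x x) := by
  rw [← Finset.univ_sum_single x]
  refine Finset.sum_induction _ (fun v => Even (B v v)) ?_ (by simp) ?_
  · intro v w hv hw
    have : B (v + w) (v + w) = B v v + B w w + 2 * B v w := by
      simp only [map_add, LinearMap.add_apply, B_symm w v]; ring
    rw [this]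
    exact (hv.add hw).add (even_two_mul _)
  · intro i _
    have : B (Pi.single i (x i)) (Pi.single i (x i)) = x i * gram i i * x i := by
      rw [B_apply, Finset.sum_eq_single i, Finset.sum_eq_single i]
      all_goals simp +contextual
    rw [this]
    exact ((gram_diag_even i).mul_left _).mul_right _

theorem Bq_single (x : LamIdx → ℚ) (k : LamIdx) :
    Bq x (toQlin (Pi.single k 1)) = ∑ i, x i * gram i k := by
  rw [Bq_apply]
  refine Finset.sum_congr rfl fun i _ => ?_
  rw [Finset.sum_eq_single k]
  · simp [toQlin]
  · intro j _ hj; simp [toQlin, hj]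
  · simp

theorem B_uu (y : LamIdx → ℤ) : B y uu = y (.inl (0, 0)) + y (.inl (0, 1)) := by
  simp [B_apply, Fintype.sum_sum_type, Fintype.sum_prod_type, gram, uu, Fin.sum_univ_succ]

theorem B_ee1 (y : LamIdx → ℤ) : B y ee1 = y (.inl (0, 1)) - y (.inl (0, 0)) := by
  simp [B_apply, Fintype.sum_sum_type, Fintype.sum_prod_type, gram, ee1, Fin.sum_univ_succ]
  ring

theorem B_ee2 (y : LamIdx → ℤ) : B y ee2 = -2 * y (.inr (.inr 0)) := by
  simp [B_apply, Fintype.sum_sum_type, gram, ee2]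
  ring

/-! ### The lattice `L` and the discriminant form -/

/-- As `(x, u)` is the sum of the two coordinates in the first hyperbolic plane, `L` is the
index-2 sublattice of `Λ̃` on which this sum is even. -/
theorem mem_LL (y : LamIdx → ℤ) : y ∈ LL ↔ Even (y (.inl (0, 0)) + y (.inl (0, 1))) := by
  rw [← B_uu]
  have huu : B uu uu = 2 := by rw [B_uu]; rfl
  simp only [LL, Submodule.mem_sup, Submodule.mem_span_singleton, Lam, LinearMap.mem_ker,
    LinearMap.flip_apply]
  constructor
  · rintro ⟨_, ⟨a, rfl⟩, l, hl, rfl⟩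
    simp only [map_add, map_smul, LinearMap.add_apply, LinearMap.smul_apply, hl, huu, smul_eq_mul]
    simp
  · rintro ⟨k, hk⟩
    refine ⟨_, ⟨k, rfl⟩, y - k • uu, ?_, by abel⟩
    simp only [map_sub, map_smul, LinearMap.sub_apply, LinearMap.smul_apply, huu, hk, smul_eq_mul]
    ring

/-- The residue of `(x, x)` modulo `2ℤ` is constant on classes modulo `L`. -/
theorem Bq_sub_Bq_even {x y : LamIdx → ℚ} (hy : y ∈ Ldual) (h : x - y ∈ Lmap) :
    ∃ k : ℤ, Bq x x - Bq y y = 2 * k := by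
  obtain ⟨l, hl, e⟩ := h
  obtain ⟨n, hn⟩ := hy l hl
  obtain ⟨m, hm⟩ := B_even l
  obtain rfl : x = y + toQlin l := by rw [e]; abel
  refine ⟨n + m, ?_⟩
  simp only [map_add, LinearMap.add_apply, Bq_symm (toQlin l) y, hn, Bq_toQlin, hm]
  push_cast
  ring

/-! ### Half-integral combinations of `u`, `e₁`, `e₂` -/

/-- The element `(a u + b e₁ + c e₂) / 2` of `Λ̃ ⊗ ℚ`. -/
noncomputable def halfVec (a b c : ℤ) : LamIdx → ℚ :=
  (2⁻¹ : ℚ) • toQlin (a • uu + b • ee1 + c • ee2)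

theorem halfVec_sub (a b c a' b' c' : ℤ) :
    halfVec a b c - halfVec a' b' c' = halfVec (a - a') (b - b') (c - c') := by
  rw [halfVec, halfVec, halfVec, ← smul_sub, ← map_sub]
  congr 2
  module

theorem Bq_halfVec (a b c : ℤ) (y : LamIdx → ℤ) :
    Bq (halfVec a b c) (toQlin y) = (a * (y (.inl (0, 0)) + y (.inl (0, 1)))
      + b * (y (.inl (0, 1)) - y (.inl (0, 0))) - 2 * c * y (.inr (.inr 0))) / 2 := by
  rw [halfVec, map_smul, LinearMap.smul_apply, Bq_toQlin, B_symm]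
  simp only [map_add, map_smul, B_uu, B_ee1, B_ee2, smul_eq_mul]
  push_cast
  ring

theorem halfVec_mem_Ldual (a b c : ℤ) : halfVec a b c ∈ Ldual := by
  intro y hy
  obtain ⟨k, hk⟩ := (mem_LL y).1 hy
  refine ⟨a * k + b * (k - y (.inl (0, 0))) - c * y (.inr (.inr 0)), ?_⟩
  have hk' : (y (.inl (0, 1)) : ℚ) = 2 * k - y (.inl (0, 0)) := by
    rw [eq_sub_iff_add_eq']; exact_mod_cast hk.trans (two_mul k).symm
  rw [Bq_halfVec, hk']
  push_cast
  ring

theorem Bq_halfVec_self (a b c : ℤ) :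
    Bq (halfVec a b c) (halfVec a b c) = (a ^ 2 - b ^ 2 - c ^ 2 : ℤ) / 2 := by
  conv_lhs => arg 2; rw [halfVec]
  rw [map_smul, Bq_halfVec]
  simp [uu, ee1, ee2]
  ring

theorem halfVec_mem_Lmap (a b c : ℤ) :
    halfVec a b c ∈ Lmap ↔ Even a ∧ Even b ∧ Even c := by
  constructor
  · rintro ⟨y, hy, e⟩
    have h (i : LamIdx) : 2 * y i = a * uu i + b * ee1 i + c * ee2 i := by
      have := congrFun e i
      simp only [halfVec, toQlin, LinearMap.coe_mk, AddHom.coe_mk, Pi.smul_apply, Pi.add_apply,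
        smul_eq_mul] at this
      push_cast at this
      have h2 : (2 * y i : ℚ) = a * uu i + b * ee1 i + c * ee2 i := by rw [this]; ring
      exact_mod_cast h2
    have h0 := h (.inl (0, 0))
    have h1 := h (.inl (0, 1))
    have h2 := h (.inr (.inr 0))
    have hy := (mem_LL y).1 hy
    simp [uu, ee1, ee2] at h0 h1 h2
    simp only [Int.even_iff] at hy ⊢
    omega
  · rintro ⟨⟨a, rfl⟩, ⟨b, rfl⟩, ⟨c, rfl⟩⟩
    refine ⟨a • uu + b • ee1 + c • ee2, (mem_LL _).2 ⟨a, ?_⟩, ?_⟩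
    · simp [uu, ee1, ee2]
      ring
    · have : (a + a) • uu + (b + b) • ee1 + (c + c) • ee2
          = (2 : ℤ) • (a • uu + b • ee1 + c • ee2) := by module
      rw [halfVec, this, map_smul, ← Int.cast_smul_eq_zsmul ℚ (2 : ℤ) (toQlin _), smul_smul]
      norm_num

/-! ### Generators of the discriminant group -/

/-- The inverse of the `E₈` Gram matrix. -/
def E8inv : Matrix (Fin 8) (Fin 8) ℤ :=
  !![2, 3, 4, 5, 6, 4, 2, 3;
     3, 6, 8, 10, 12, 8, 4, 6;
     4, 8, 12, 15, 18, 12, 6, 9;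
     5, 10, 15, 20, 24, 16, 8, 12;
     6, 12, 18, 24, 30, 20, 10, 15;
     4, 8, 12, 16, 20, 14, 7, 10;
     2, 4, 6, 8, 10, 7, 4, 5;
     3, 6, 9, 12, 15, 10, 5, 8]

theorem E8mat_mul_E8inv : E8mat * E8inv = 1 := by
  decide

/-- `E₈` is unimodular: a rational vector pairing integrally with `E₈` lies in `E₈`. -/
theorem E8_dual (v : Fin 8 → ℚ) (h : ∀ k, ∃ n : ℤ, ∑ i, v i * E8mat i k = n) (j : Fin 8) :
    ∃ z : ℤ, v j = z := by
  choose n hn using h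
  refine ⟨∑ k, n k * E8inv k j, ?_⟩
  have hid (i : Fin 8) : ∑ k, (E8mat i k : ℚ) * E8inv k j = if i = j then 1 else 0 := by
    have := congrFun (congrFun E8mat_mul_E8inv i) j
    rw [Matrix.mul_apply, Matrix.one_apply] at this
    exact_mod_cast this
  push_cast
  simp only [← hn, Finset.sum_mul]
  rw [Finset.sum_comm]
  simp [mul_assoc, ← Finset.mul_sum, hid]

theorem single_mem_LL {k : LamIdx} (h0 : k ≠ .inl (0, 0)) (h1 : k ≠ .inl (0, 1)) :
    Pi.single k 1 ∈ LL := by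
  simp [mem_LL, h0.symm, h1.symm]

/-- Away from the first hyperbolic plane and the summand `(−2)`, the lattice `L` is unimodular,
so the coordinates of a dual vector are integers there. -/
theorem coord_int {x : LamIdx → ℚ} (hx : x ∈ Ldual) {k : LamIdx} (h0 : k ≠ .inl (0, 0))
    (h1 : k ≠ .inl (0, 1)) (h2 : k ≠ .inr (.inr 0)) : ∃ z : ℤ, x k = z := by
  rcases k with ⟨a, k⟩ | ⟨a, k⟩ | k
  · have key : Bq x (toQlin (Pi.single (.inl (a, 1 - k)) 1)) = x (.inl (a, k)) := by
      simp [Bq_single, Fintype.sum_sum_type, Fintype.sum_prod_type, gram]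
      fin_cases k <;> simp
    rw [← key]
    apply hx
    apply single_mem_LL <;> fin_cases a <;> fin_cases k <;> simp_all
  · refine E8_dual (fun i => x (.inr (.inl (a, i)))) (fun i => ?_) k
    obtain ⟨n, hn⟩ := hx _ (single_mem_LL (k := .inr (.inl (a, i))) (by simp) (by simp))
    refine ⟨-n, ?_⟩
    push_cast
    rw [← hn]
    simp [Bq_single, Fintype.sum_sum_type, Fintype.sum_prod_type, gram]
  · exact absurd (by rw [Subsingleton.elim k 0]) h2

/-- The classes of `u/2`, `e₁/2`, `e₂/2` generate `L^∨ / L`. -/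
theorem exists_halfVec {x : LamIdx → ℚ} (hx : x ∈ Ldual) :
    ∃ a b c : ℤ, x - halfVec a b c ∈ Lmap := by
  have hu : uu ∈ LL := by simp [mem_LL, uu]
  have he1 : ee1 ∈ LL := by simp [mem_LL, ee1]
  have he2 : ee2 ∈ LL := by simp [mem_LL, ee2]
  obtain ⟨a, ha⟩ := hx _ hu
  obtain ⟨b, hb⟩ := hx _ he1
  obtain ⟨c, hc⟩ := hx _ he2
  have ha' : x (.inl (0, 0)) + x (.inl (0, 1)) = a := by
    rw [← ha]
    simp [Bq_apply, Fintype.sum_sum_type, Fintype.sum_prod_type, gram, uu, toQlin,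
      Fin.sum_univ_succ]
  have hb' : x (.inl (0, 1)) - x (.inl (0, 0)) = b := by
    rw [← hb]
    simp [Bq_apply, Fintype.sum_sum_type, Fintype.sum_prod_type, gram, ee1, toQlin,
      Fin.sum_univ_succ]
    ring
  have hc' : -2 * x (.inr (.inr 0)) = c := by
    rw [← hc]
    simp [Bq_apply, Fintype.sum_sum_type, gram, ee2, toQlin]
    ring
  have hz (k : LamIdx) : ∃ z : ℤ, (x - halfVec a (-b) (-c)) k = z ∧
      (k = .inl (0, 0) → z = 0) ∧ (k = .inl (0, 1) → z = 0) := by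
    by_cases h0 : k = .inl (0, 0)
    · refine ⟨0, ?_, by simp, by simp⟩
      subst h0
      simp [halfVec, toQlin, uu, ee1, ee2]
      linarith
    by_cases h1 : k = .inl (0, 1)
    · refine ⟨0, ?_, by simp, by simp⟩
      subst h1
      simp [halfVec, toQlin, uu, ee1, ee2]
      linarith
    by_cases h2 : k = .inr (.inr 0)
    · refine ⟨0, ?_, by simp, by simp⟩
      subst h2
      simp [halfVec, toQlin, uu, ee1, ee2]
      linarith
    obtain ⟨z, hz⟩ := coord_int hx h0 h1 h2
    refine ⟨z, ?_, by simp [h0], by simp [h1]⟩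
    simp [halfVec, toQlin, uu, ee1, ee2, h0, h1, h2, hz]
  choose z hz hz0 hz1 using hz
  exact ⟨a, -b, -c, z, (mem_LL z).2 (by simp [hz0, hz1]), funext fun k => (hz k).symm⟩

/-! ### Isotropic classes -/

/-- The quadratic form on `L^∨ / L ≅ (ℤ/2)³` vanishes modulo `2ℤ` at a nonzero class exactly
when the class is `(1,1,0)` or `(1,0,1)`. -/
theorem four_dvd_iff (a b c : ℤ) (h : ¬(Even a ∧ Even b ∧ Even c)) :
    4 ∣ a ^ 2 - b ^ 2 - c ^ 2 ↔
      (Even (a - 1) ∧ Even (b - 1) ∧ Even (c - 0)) ∨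
      (Even (a - 1) ∧ Even (b - 0) ∧ Even (c - 1)) := by
  have sq (n : ℤ) : (n % 2 = 0 ∧ n ^ 2 % 4 = 0) ∨ (n % 2 = 1 ∧ n ^ 2 % 4 = 1) := by
    rcases Int.even_or_odd n with hn | hn
    · refine .inl ⟨Int.even_iff.1 hn, ?_⟩
      obtain ⟨k, rfl⟩ := hn
      exact Int.emod_eq_zero_of_dvd ⟨k ^ 2, by ring⟩
    · exact .inr ⟨Int.odd_iff.1 hn, Int.sq_mod_four_eq_one_of_odd hn⟩
  have ha := sq a
  have hb := sq b
  have hc := sq c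
  simp only [Int.even_iff] at h ⊢
  generalize a ^ 2 = A at *
  generalize b ^ 2 = B at *
  generalize c ^ 2 = C at *
  omega

/-- for `x ∈ L^∨` the residue `(x,x) mod 2ℤ` depends only on the class of
`x` in `A_L = L^∨/L`, and the set of nonzero classes with `(x,x) ≡ 0 (mod 2ℤ)` consists
exactly of the two distinct classes `[(u+e₁)/2]` and `[(u+e₂)/2]`. -/
theorem isotropic_classes :
    (∀ x y : LamIdx → ℚ, x ∈ Ldual → y ∈ Ldual → x - y ∈ Lmap →
      ∃ k : ℤ, Bq x x - Bq y y = 2 * k) ∧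
    ((2⁻¹ : ℚ) • (toQlin uu + toQlin ee1) ∈ Ldual ∧
      (2⁻¹ : ℚ) • (toQlin uu + toQlin ee2) ∈ Ldual) ∧
    (2⁻¹ : ℚ) • (toQlin uu + toQlin ee1) - (2⁻¹ : ℚ) • (toQlin uu + toQlin ee2) ∉ Lmap ∧
    (∀ x : LamIdx → ℚ, x ∈ Ldual → x ∉ Lmap →
      ((∃ k : ℤ, Bq x x = 2 * k) ↔
        (x - (2⁻¹ : ℚ) • (toQlin uu + toQlin ee1) ∈ Lmap ∨
          x - (2⁻¹ : ℚ) • (toQlin uu + toQlin ee2) ∈ Lmap))) := by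
  have e1 : (2⁻¹ : ℚ) • (toQlin uu + toQlin ee1) = halfVec 1 1 0 := by simp [halfVec]
  have e2 : (2⁻¹ : ℚ) • (toQlin uu + toQlin ee2) = halfVec 1 0 1 := by simp [halfVec]
  rw [e1, e2]
  refine ⟨fun x y _ hy h => Bq_sub_Bq_even hy h,
    ⟨halfVec_mem_Ldual _ _ _, halfVec_mem_Ldual _ _ _⟩, ?_, ?_⟩
  · simp [halfVec_sub, halfVec_mem_Lmap]
  intro x hx hxL
  obtain ⟨a, b, c, h⟩ := exists_halfVec hx
  have hsub (v : LamIdx → ℚ) : x - v ∈ Lmap ↔ halfVec a b c - v ∈ Lmap := by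
    rw [← sub_add_sub_cancel x (halfVec a b c) v]
    exact Submodule.add_mem_iff_right _ h
  have hne : ¬(Even a ∧ Even b ∧ Even c) := by
    rw [← halfVec_mem_Lmap]
    simpa using (hsub 0).not.1 (by simpa using hxL)
  rw [hsub, hsub, halfVec_sub, halfVec_sub, halfVec_mem_Lmap, halfVec_mem_Lmap,
    ← four_dvd_iff a b c hne]
  obtain ⟨m, hm⟩ := Bq_sub_Bq_even (halfVec_mem_Ldual a b c) h
  rw [Bq_halfVec_self] at hm
  constructor
  · rintro ⟨k, hk⟩
    refine ⟨k - m, ?_⟩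
    have : ((a ^ 2 - b ^ 2 - c ^ 2 : ℤ) : ℚ) = 4 * (k - m) := by linarith
    exact_mod_cast this
  · rintro ⟨k, hk⟩
    refine ⟨k + m, ?_⟩
    rw [hk] at hm
    push_cast at hm ⊢
    linarith
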